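/- arXiv:2012.11953 — 2 statements merged into one kernel-verified Lean document; each statement's English description precedes it below -/
import Mathlib

section
/- Let β ∈ (0,1] and let G be a graph on a vertex set V with |V| = n such that every A ⊆ V with |A| < βn satisfies |N_G(A)| ≥ |A|. Suppose the maximum matching size s_1(G) is strictly less than ⌊n/2⌋. Let IP_2 denote the set of unordered pairs {x,y} of distinct vertices for which there exists a maximum matching of G (a matching with s_1(G) edges) leaving both x and y uncovered. Then |IP_2| ≥ (βn)²/2. -/
namespace Paper

/-- The (outer) neighbourhood `N_G(A)` of a vertex set. -/
def nbr {V : Type*} (G : SimpleGraph V) (A : Set V) : Set V :=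
  {v | v ∉ A ∧ ∃ u ∈ A, G.Adj u v}

/-- A finite set of unordered pairs forming a matching (pairwise disjoint non-loops). -/
def IsMatchingFinset {V : Type*} (F : Finset (Sym2 V)) : Prop :=
  (∀ e ∈ F, ¬ e.IsDiag) ∧ ∀ e ∈ F, ∀ f ∈ F, e ≠ f → ∀ v, v ∈ e → v ∉ f

/-- `s_1(G)`: the maximum size of a matching contained in `G`. -/
noncomputable def sOne {V : Type*} (G : SimpleGraph V) : ℕ :=
  sSup {m : ℕ | ∃ F : Finset (Sym2 V), ↑F ⊆ G.edgeSet ∧ IsMatchingFinset F ∧ F.card = m}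

/-- `IP₂(G)`: the unordered pairs of distinct vertices both left uncovered by some
maximum matching of `G`. -/
def IP2 {V : Type*} (G : SimpleGraph V) : Set (Sym2 V) :=
  {e | ¬ e.IsDiag ∧ ∃ F : Finset (Sym2 V),
    ↑F ⊆ G.edgeSet ∧ IsMatchingFinset F ∧ F.card = sOne G ∧
    ∀ v, v ∈ e → ∀ f ∈ F, v ∉ f}

end Paper

open Paper

namespace Paper

/-- `F` misses `v`. -/
def Miss {V : Type*} (F : Finset (Sym2 V)) (v : V) : Prop := ∀ f ∈ F, v ∉ f

/-- Maximum matchings of `G`. -/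
def IsMaxM {V : Type*} (G : SimpleGraph V) (F : Finset (Sym2 V)) : Prop :=
  ↑F ⊆ G.edgeSet ∧ IsMatchingFinset F ∧ F.card = sOne G

lemma le_sOne {V : Type*} [Fintype V] (G : SimpleGraph V) (F : Finset (Sym2 V))
    (h1 : ↑F ⊆ G.edgeSet) (h2 : IsMatchingFinset F) : F.card ≤ sOne G := by
  classical
  apply le_csSup
  · refine ⟨Fintype.card (Sym2 V), ?_⟩
    rintro m ⟨F, -, -, rfl⟩
    exact Finset.card_le_univ F
  · exact ⟨F, h1, h2, rfl⟩

lemma exists_max {V : Type*} [Fintype V] (G : SimpleGraph V) : ∃ F, IsMaxM G F := by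
  classical
  have : sOne G ∈ {m : ℕ | ∃ F : Finset (Sym2 V), ↑F ⊆ G.edgeSet ∧
      IsMatchingFinset F ∧ F.card = m} := by
    apply Nat.sSup_mem
    · exact ⟨0, ∅, by simp, by simp [IsMatchingFinset], by simp⟩
    · refine ⟨Fintype.card (Sym2 V), ?_⟩
      rintro m ⟨F, -, -, rfl⟩
      exact Finset.card_le_univ F
  obtain ⟨F, h⟩ := this
  exact ⟨F, h⟩

lemma IsMaxM.adj {V : Type*} {G : SimpleGraph V} {F : Finset (Sym2 V)} (h : IsMaxM G F)
    {a b : V} (hab : s(a, b) ∈ F) : G.Adj a b := by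
  have := h.1 hab
  simpa using this

lemma IsMaxM.uniq {V : Type*} {G : SimpleGraph V} {F : Finset (Sym2 V)} (h : IsMaxM G F)
    {a b c : V} (hab : s(a, b) ∈ F) (hac : s(a, c) ∈ F) : b = c := by
  by_contra hne
  have := h.2.1.2 _ hab _ hac (fun h => hne (Sym2.congr_right.1 h)) a (by simp)
  simp at this

lemma not_miss {V : Type*} {F : Finset (Sym2 V)} {a : V} (h : ¬ Miss F a) :
    ∃ b, s(a, b) ∈ F := by
  unfold Miss at h
  push Not at h
  obtain ⟨f, hf, ha⟩ := h
  obtain ⟨b, rfl⟩ := ha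
  exact ⟨b, hf⟩

lemma Miss.ne {V : Type*} {F : Finset (Sym2 V)} {a b c : V} (h : Miss F a)
    (hb : s(b, c) ∈ F) : a ≠ b ∧ a ≠ c := by
  have := h _ hb
  simpa using this

lemma matching_insert {V : Type*} [DecidableEq V] {F : Finset (Sym2 V)} {b c : V}
    (hF : IsMatchingFinset F) (hbc : b ≠ c) (hb : Miss F b) (hc : Miss F c) :
    IsMatchingFinset (insert s(b, c) F) := by
  refine ⟨?_, ?_⟩
  · intro e he
    rcases Finset.mem_insert.1 he with rfl | he
    · simpa using hbc
    · exact hF.1 e he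
  · intro e he f hf hef v hve hvf
    rcases Finset.mem_insert.1 he with rfl | he' <;> rcases Finset.mem_insert.1 hf with rfl | hf'
    · exact hef rfl
    · rcases Sym2.mem_iff.1 hve with rfl | rfl
      · exact hb _ hf' hvf
      · exact hc _ hf' hvf
    · rcases Sym2.mem_iff.1 hvf with rfl | rfl
      · exact hb _ he' hve
      · exact hc _ he' hve
    · exact hF.2 e he' f hf' hef v hve hvf

lemma IsMaxM.no_aug {V : Type*} [Fintype V] {G : SimpleGraph V} {F : Finset (Sym2 V)}
    (h : IsMaxM G F) {b c : V} (hbc : G.Adj b c) (hb : Miss F b) (hc : Miss F c) : False := by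
  classical
  have h1 := le_sOne G (insert s(b, c) F) (by
    intro e he
    rcases Finset.mem_insert.1 (Finset.mem_coe.1 he) with rfl | he
    · simpa using hbc
    · exact h.1 he) (matching_insert h.2.1 hbc.ne hb hc)
  rw [Finset.card_insert_of_notMem (fun hm => hb _ hm (by simp)), h.2.2] at h1
  omega

/-- Rotation: replace the edge `ab` by `bc` where `c` is missed. -/
lemma IsMaxM.swap {V : Type*} [DecidableEq V] {G : SimpleGraph V} {F : Finset (Sym2 V)}
    (h : IsMaxM G F) {a b c : V} (hab : s(a, b) ∈ F) (hbc : G.Adj b c) (hc : Miss F c) :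
    IsMaxM G (insert s(b, c) (F.erase s(a, b))) ∧
      Miss (insert s(b, c) (F.erase s(a, b))) a ∧
      ∀ x, x ≠ c → Miss F x → Miss (insert s(b, c) (F.erase s(a, b))) x := by
  have hne := h.adj hab
  have hac := hc.ne hab
  have hm : ∀ v, v ∈ s(a, b) → Miss (F.erase s(a, b)) v := by
    intro v hv f hf hvf
    have := Finset.mem_erase.1 hf
    exact h.2.1.2 _ hab _ this.2 (Ne.symm this.1) v hv hvf
  have hM : ∀ v, Miss F v → Miss (F.erase s(a, b)) v :=
    fun v hv f hf => hv f (Finset.mem_of_mem_erase hf)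
  have hI : ∀ v, v ≠ b → v ≠ c → Miss (F.erase s(a, b)) v →
      Miss (insert s(b, c) (F.erase s(a, b))) v := by
    intro v h1 h2 hv f hf
    rcases Finset.mem_insert.1 hf with rfl | hf
    · simp [h1, h2]
    · exact hv f hf
  refine ⟨⟨?_, ?_, ?_⟩, ?_, ?_⟩
  · intro e he
    rcases Finset.mem_insert.1 (Finset.mem_coe.1 he) with rfl | he
    · simpa using hbc
    · exact h.1 (Finset.mem_of_mem_erase he)
  · apply matching_insert _ hbc.ne (hm b (by simp)) (hM c hc)
    exact ⟨fun e he => h.2.1.1 e (Finset.mem_of_mem_erase he), fun e he f hf =>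
      h.2.1.2 e (Finset.mem_of_mem_erase he) f (Finset.mem_of_mem_erase hf)⟩
  · rw [Finset.card_insert_of_notMem (fun hh => hm b (by simp) _ hh (by simp)),
      Finset.card_erase_add_one hab, h.2.2]
  · exact hI a hne.ne hac.1.symm (hm a (by simp))
  · intro x hxc hx
    exact hI x (hx.ne hab).2 hxc (hM x hx)

/-- `y ≠ x` are both missed by some maximum matching. -/
def Pr {V : Type*} (G : SimpleGraph V) (x y : V) : Prop :=
  x ≠ y ∧ ∃ F, IsMaxM G F ∧ Miss F x ∧ Miss F y

lemma key {V : Type*} [Fintype V] [DecidableEq V] {G : SimpleGraph V} {x v w : V}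
    {M : Finset (Sym2 V)} (hM : IsMaxM G M) (hMx : Miss M x) (he : s(v, w) ∈ M)
    (hv : ¬ Pr G x v) (hw : ¬ Pr G x w) :
    ∀ (k : ℕ) (N : Finset (Sym2 V)) (y : V), (M \ N).card = k → IsMaxM G N → Miss N x →
      x ≠ y → Miss N y →
      ∃ M', IsMaxM G M' ∧ Miss M' x ∧ Miss M' y ∧ s(v, w) ∈ M' ∧ M' ⊆ M ∪ N := by
  intro k
  induction k using Nat.strong_induction_on with
  | _ k ih =>
  intro N y hk hN hNx hxy hNy
  by_cases hMy : Miss M y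
  · exact ⟨M, hM, hMx, hMy, he, Finset.subset_union_left⟩
  obtain ⟨y1, hy1⟩ := not_miss hMy
  have hadj := hM.adj hy1
  have hN1 : ¬ Miss N y1 := fun h => hN.no_aug hadj hNy h
  obtain ⟨y2, hy2⟩ := not_miss hN1
  have hyy := hNy.ne hy2
  have hy2' : s(y2, y1) ∈ N := by rwa [Sym2.eq_swap]
  have hxx := hNx.ne hy2
  obtain ⟨hN', hN'2, hN'x⟩ := hN.swap hy2' hadj.symm hNy
  set N' := insert s(y1, y) (N.erase s(y2, y1)) with hN'def
  have hlt : (M \ N').card < (M \ N).card := by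
    apply Finset.card_lt_card
    refine ⟨?_, ?_⟩
    · intro f hf
      rw [Finset.mem_sdiff] at hf ⊢
      refine ⟨hf.1, fun hfN => hf.2 ?_⟩
      refine Finset.mem_insert_of_mem (Finset.mem_erase.2 ⟨?_, hfN⟩)
      rintro rfl
      have h1 : s(y1, y2) ∈ M := by rw [Sym2.eq_swap]; exact hf.1
      have h2 : s(y1, y) ∈ M := by rw [Sym2.eq_swap]; exact hy1
      exact hyy.2 (hM.uniq h2 h1)
    · intro hsub
      have h1 : s(y, y1) ∈ M \ N :=
        Finset.mem_sdiff.2 ⟨hy1, fun h => hNy _ h (by simp)⟩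
      have := (Finset.mem_sdiff.1 (hsub h1)).2
      exact this (by rw [Sym2.eq_swap]; exact Finset.mem_insert_self _ _)
  obtain ⟨M', hM', hM'x, hM'2, heM', hsub⟩ :=
    ih _ (hk ▸ hlt) N' y2 rfl hN' (hN'x x hxy hNx) hxx.2 hN'2
  have hN1adj := hN.adj hy2
  have hc : ¬ Miss M' y1 := fun h => hM'.no_aug hN1adj h hM'2
  obtain ⟨u, hu⟩ := not_miss hc
  have huy : u = y := by
    rcases Finset.mem_union.1 (hsub hu) with h | h
    · have h2 : s(y1, y) ∈ M := by rw [Sym2.eq_swap]; exact hy1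
      exact hM.uniq h h2
    · exact hN'.uniq h (Finset.mem_insert_self _ _)
  subst huy
  have hu' : s(u, y1) ∈ M' := by rwa [Sym2.eq_swap]
  obtain ⟨h1, h2, h3⟩ := hM'.swap hu' hN1adj hM'2
  refine ⟨_, h1, h3 x hxx.2 hM'x, h2, ?_, ?_⟩
  · refine Finset.mem_insert_of_mem (Finset.mem_erase.2 ⟨?_, heM'⟩)
    intro heq
    have hPu : Pr G x u := ⟨hxy, N, hN, hNx, hNy⟩
    rcases Sym2.eq_iff.1 heq with ⟨rfl, rfl⟩ | ⟨rfl, rfl⟩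
    · exact hv hPu
    · exact hw hPu
  · intro f hf
    rcases Finset.mem_insert.1 hf with rfl | hf
    · exact Finset.mem_union_right _ hy2
    · rcases Finset.mem_union.1 (hsub (Finset.mem_of_mem_erase hf)) with h | h
      · exact Finset.mem_union_left _ h
      · rcases Finset.mem_insert.1 h with rfl | h
        · exact Finset.mem_union_left _ (by rw [Sym2.eq_swap]; exact hy1)
        · exact Finset.mem_union_right _ (Finset.mem_of_mem_erase h)

lemma exists_missed {V : Type*} [Fintype V] {G : SimpleGraph V} {M : Finset (Sym2 V)}
    (hM : IsMaxM G M) (hs : sOne G < Fintype.card V / 2) (S : Finset V) (hS : S.card ≤ 1) :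
    ∃ z, z ∉ S ∧ Miss M z := by
  classical
  by_contra hcon
  push Not at hcon
  have hU : (Finset.univ : Finset V) ⊆ S ∪ M.biUnion Sym2.toFinset := by
    intro z _
    by_cases hz : z ∈ S
    · exact Finset.mem_union_left _ hz
    · obtain ⟨b, hb⟩ := not_miss (hcon z hz)
      exact Finset.mem_union_right _ (Finset.mem_biUnion.2 ⟨_, hb, by simp⟩)
  have h1 := Finset.card_le_card hU
  have h2 := Finset.card_union_le S (M.biUnion Sym2.toFinset)
  have h3 : (M.biUnion Sym2.toFinset).card ≤ M.card * 2 := by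
    apply Finset.card_biUnion_le_card_mul
    intro e he
    rw [Sym2.card_toFinset]
    split_ifs <;> omega
  rw [hM.2.2] at h3
  rw [Finset.card_univ] at h1
  omega

lemma nbr_lt {V : Type*} [Fintype V] {G : SimpleGraph V} {x : V} {M : Finset (Sym2 V)}
    (hM : IsMaxM G M) (hMx : Miss M x) (hs : sOne G < Fintype.card V / 2) :
    (nbr G {y | Pr G x y}).ncard < {y | Pr G x y}.ncard := by
  classical
  obtain ⟨z, hz, hMz⟩ := exists_missed hM hs {x} (by simp)
  have hzA : z ∈ {y | Pr G x y} :=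
    ⟨fun h => hz (by simp [h]), M, hM, hMx, hMz⟩
  have hex : ∀ v ∈ nbr G {y | Pr G x y}, ∃ w, s(v, w) ∈ M ∧ Pr G x w := by
    rintro v ⟨hvA, y, ⟨hxy, N, hN, hNx, hNy⟩, hyv⟩
    have hvA' : ¬ Pr G x v := hvA
    have hxv : x ≠ v := by
      rintro rfl
      exact hN.no_aug hyv hNy hNx
    have hMv : ¬ Miss M v := fun h => hvA' ⟨hxv, M, hM, hMx, h⟩
    obtain ⟨w, hw⟩ := not_miss hMv
    refine ⟨w, hw, ?_⟩
    by_contra hwA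
    obtain ⟨M', hM', hM'x, hM'y, heM', -⟩ := key hM hMx hw hvA' hwA _ N y rfl hN hNx hxy hNy
    have heM'' : s(w, v) ∈ M' := by rwa [Sym2.eq_swap]
    obtain ⟨h1, h2, h3⟩ := hM'.swap heM'' hyv.symm hM'y
    exact hwA ⟨(hM'x.ne heM').2, _, h1, h3 x hxy hM'x, h2⟩
  choose! p hp1 hp2 using hex
  have h1 : (nbr G {y | Pr G x y}).ncard ≤ ({y | Pr G x y} \ {z}).ncard := by
    apply Set.ncard_le_ncard_of_injOn p
    · intro v hv
      exact ⟨hp2 v hv, fun h => (hMz.ne (hp1 v hv)).2 (by simpa using Eq.symm h)⟩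
    · intro a ha b hb hab
      have h1 := hp1 a ha
      have h2 := hp1 b hb
      rw [Sym2.eq_swap] at h1 h2
      rw [← hab] at h2
      exact hM.uniq h1 h2
  exact lt_of_le_of_lt h1 (Set.ncard_sdiff_singleton_lt_of_mem hzA (Set.toFinite _))

/-- The graph of pairs. -/
def prGraph {V : Type*} (G : SimpleGraph V) : SimpleGraph V where
  Adj := Pr G
  symm := ⟨fun _ _ ⟨h, F, h1, h2, h3⟩ => ⟨h.symm, F, h1, h3, h2⟩⟩
  loopless := ⟨fun _ h => h.1 rfl⟩

lemma IP2_eq {V : Type*} (G : SimpleGraph V) : IP2 G = (prGraph G).edgeSet := by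
  ext e
  induction e with
  | _ a b =>
  simp only [SimpleGraph.mem_edgeSet, prGraph, Pr, IP2, Set.mem_ofPred_eq, IsMaxM, Miss,
    Sym2.mem_iff, Sym2.mk_isDiag_iff]
  constructor
  · rintro ⟨h, F, h1, h2, h3, h4⟩
    exact ⟨h, F, ⟨h1, h2, h3⟩, h4 a (Or.inl rfl), h4 b (Or.inr rfl)⟩
  · rintro ⟨h, F, ⟨h1, h2, h3⟩, h4, h5⟩
    refine ⟨h, F, h1, h2, h3, ?_⟩
    rintro v (rfl | rfl)
    · exact h4
    · exact h5

end Paper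

/-- **Lemma 18 (many uncovered pairs).**  If `G` is an expander (`|N_G(A)| ≥ |A|` for all
`|A| < βn`) whose maximum matching is not near-perfect (`s_1(G) < ⌊n/2⌋`), then
`|IP₂| ≥ (βn)²/2`. -/
theorem lemma_IP2 (V : Type*) [Fintype V] (G : SimpleGraph V) (β : ℝ)
    (hβ : 0 < β) (hβ1 : β ≤ 1)
    (hexp : ∀ A : Set V, (A.ncard : ℝ) < β * Fintype.card V →
      A.ncard ≤ (nbr G A).ncard)
    (hs : sOne G < Fintype.card V / 2) :
    (β * Fintype.card V) ^ 2 / 2 ≤ ((IP2 G).ncard : ℝ) := by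
  classical
  have hdeg : ∀ x, (∃ M, IsMaxM G M ∧ Miss M x) →
      β * Fintype.card V ≤ ((prGraph G).degree x : ℝ) := by
    rintro x ⟨M, hM, hMx⟩
    have h1 := nbr_lt hM hMx hs
    have h2 : {y | Pr G x y}.ncard = (prGraph G).degree x := by
      rw [← SimpleGraph.card_neighborFinset_eq_degree, ← Set.ncard_coe_finset,
        SimpleGraph.coe_neighborFinset]
      rfl
    rw [← h2]
    by_contra hlt
    exact absurd (hexp _ (not_le.1 hlt)) (not_le.2 h1)
  obtain ⟨M, hM⟩ := exists_max G
  obtain ⟨x0, -, hx0⟩ := exists_missed hM hs ∅ (by simp)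
  have hx0d := hdeg x0 ⟨M, hM, hx0⟩
  have hE : (IP2 G).ncard = (prGraph G).edgeFinset.card := by
    rw [IP2_eq, ← SimpleGraph.coe_edgeFinset, Set.ncard_coe_finset]
  have hsum := (prGraph G).sum_degrees_eq_twice_card_edges
  rw [hE]
  have hsum' : (∑ v, ((prGraph G).degree v : ℝ)) = 2 * ((prGraph G).edgeFinset.card : ℝ) := by
    exact_mod_cast hsum
  have hb0 : 0 ≤ β * Fintype.card V := by positivity
  have h1 : ∑ v ∈ (prGraph G).neighborFinset x0, (β * Fintype.card V) ≤
      ∑ v, ((prGraph G).degree v : ℝ) := by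
    refine le_trans (Finset.sum_le_sum (g := fun v => ((prGraph G).degree v : ℝ)) ?_)
      (Finset.sum_le_sum_of_subset_of_nonneg (Finset.subset_univ _) (by intros; positivity))
    intro v hv
    obtain ⟨-, F, hF, -, hFv⟩ := ((prGraph G).mem_neighborFinset x0 v).1 hv
    exact hdeg v ⟨F, hF, hFv⟩
  rw [Finset.sum_const, SimpleGraph.card_neighborFinset_eq_degree, nsmul_eq_mul] at h1
  nlinarith [mul_le_mul_of_nonneg_right hx0d hb0]
end

section
/- Let X be a finite set, p : X → [0,1], and let 𝒢 = (X, ℰ) be a graph on X. Let Δ = max_{x∈X} Σ_{y ∈ N_𝒢(x)} p(y) and p(X) = Σ_{x∈X} p(x), and let X_p ⊆ X be the random subset obtained by including each x ∈ X independently with probability p(x). Let r ≥ 1 be an integer and let 𝒯 be a set of paths on r vertices in 𝒢 (for r = 1, single vertices), where for a path T we write p[T] = ∏_{x ∈ T} p(x) and p[𝒯] = Σ_{T∈𝒯} p[T]. If p[𝒯] ≥ 6·(3Δ)^{r−2}·p(X), then the probability that no T ∈ 𝒯 has all its vertices in X_p is at most exp(−p[𝒯]/((3Δ)^{r−1}·r^r)).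 -/
open MeasureTheory Filter
open scoped ENNReal

namespace Paper

/-- The uniform distribution on `(0,1]`. -/
noncomputable def uniformLabel : Measure ℝ := volume.restrict (Set.Ioc (0 : ℝ) 1)

/-- I.i.d. uniform labels on a finite set; thresholding the label of `x` at `p x`
realises the product-Bernoulli random subset `X_p`. -/
noncomputable def bernoulliFamily (X : Type*) [Fintype X] : Measure (X → ℝ) :=
  Measure.pi fun _ => uniformLabel

/-- `Δ`: the maximum over `x` of the total weight `p(N_𝒢(x))` of the neighbourhood. -/
noncomputable def maxNbrWeight {X : Type*} [Fintype X] (𝒢 : SimpleGraph X)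
    (p : X → ℝ) : ℝ :=
  sSup {s : ℝ | ∃ x, s = ∑ᶠ y ∈ 𝒢.neighborSet x, p y}

/-- `p[𝒯] = Σ_{T∈𝒯} ∏_{x∈T} p(x)` for a family of paths (given as lists). -/
noncomputable def pathWeight {X : Type*} (p : X → ℝ) (𝒯 : Set (List X)) : ℝ :=
  ∑ᶠ T ∈ 𝒯, (T.map p).prod

end Paper

open Paper

namespace Spr
variable {X : Type*} [Fintype X] [DecidableEq X]

noncomputable def wt (p : X → ℝ) (A : Finset X) : ℝ := ∏ x, if x ∈ A then p x else 1 - p x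

noncomputable def Ex (p : X → ℝ) (f : Finset X → ℝ) : ℝ := ∑ A, wt p A * f A

noncomputable def ind (T : List X) (A : Finset X) : ℝ := if ∀ x ∈ T, x ∈ A then 1 else 0

lemma ind_nonneg (T : List X) (A : Finset X) : 0 ≤ ind T A := by
  unfold ind; split_ifs <;> norm_num

lemma ind_le_one (T : List X) (A : Finset X) : ind T A ≤ 1 := by
  unfold ind; split_ifs <;> norm_num

lemma ind_mono (T : List X) : Monotone (ind T) := by
  intro A B hAB
  unfold ind
  split_ifs with h1 h2 h2
  · exact le_rfl
  · exact absurd (fun x hx => hAB (h1 x hx)) h2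
  · norm_num
  · exact le_rfl

lemma wt_nonneg (p : X → ℝ) (hp : ∀ x, 0 ≤ p x ∧ p x ≤ 1) (A : Finset X) : 0 ≤ wt p A := by
  unfold wt
  refine Finset.prod_nonneg fun x _ => ?_
  split_ifs
  · exact (hp x).1
  · linarith [(hp x).2]

lemma Ex_mono (p : X → ℝ) (hp : ∀ x, 0 ≤ p x ∧ p x ≤ 1) {f g : Finset X → ℝ}
    (h : ∀ A, f A ≤ g A) : Ex p f ≤ Ex p g :=
  Finset.sum_le_sum fun A _ => mul_le_mul_of_nonneg_left (h A) (wt_nonneg p hp A)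

lemma wt_sum (p : X → ℝ) : ∑ A, wt p A = 1 := by
  have h := Finset.prod_add (fun x => p x) (fun x => 1 - p x) (Finset.univ : Finset X)
  simp only [add_sub_cancel, Finset.prod_const_one, Finset.powerset_univ] at h
  rw [h]
  refine Finset.sum_congr rfl fun A _ => ?_
  unfold wt
  rw [Finset.prod_ite]
  congr 1
  · congr 1; ext; simp
  · congr 1; ext; simp

lemma Ex_one (p : X → ℝ) : Ex p (fun _ => 1) = 1 := by
  simp [Ex, wt_sum]

lemma Ex_sub (p : X → ℝ) (f g : Finset X → ℝ) :
    Ex p (fun A => f A - g A) = Ex p f - Ex p g := by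
  simp [Ex, mul_sub, Finset.sum_sub_distrib]

lemma Ex_mul (p : X → ℝ) (c : ℝ) (f : Finset X → ℝ) :
    Ex p (fun A => c * f A) = c * Ex p f := by
  simp only [Ex, Finset.mul_sum]
  exact Finset.sum_congr rfl fun A _ => by ring

lemma Ex_sum {ι : Type*} (p : X → ℝ) (s : Finset ι) (f : ι → Finset X → ℝ) :
    Ex p (fun A => ∑ i ∈ s, f i A) = ∑ i ∈ s, Ex p (f i) := by
  simp only [Ex, Finset.mul_sum]
  exact Finset.sum_comm

/-- Harris inequality. -/
lemma harris (p : X → ℝ) (hp : ∀ x, 0 ≤ p x ∧ p x ≤ 1) (f z : Finset X → ℝ)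
    (hf : ∀ A, 0 ≤ f A) (hfm : Monotone f) (hz : ∀ A, z A ≤ 1) (hzm : Antitone z) :
    Ex p (fun A => f A * z A) ≤ Ex p f * Ex p z := by
  have h := fkg (μ := wt p) (f := f) (g := fun A => 1 - z A) (fun A => wt_nonneg p hp A)
    (fun A => hf A) (fun A => sub_nonneg.2 (hz A)) hfm
    (fun A B hAB => sub_le_sub_left (hzm hAB) 1) (by
      intro A B
      unfold wt
      rw [← Finset.prod_mul_distrib, ← Finset.prod_mul_distrib]
      refine le_of_eq (Finset.prod_congr rfl fun x _ => ?_)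
      by_cases hA : x ∈ A <;> by_cases hB : x ∈ B <;> simp [hA, hB, mul_comm])
  rw [wt_sum, one_mul] at h
  change Ex p f * Ex p (fun A => 1 - z A) ≤ Ex p (fun A => f A * (1 - z A)) at h
  have e : (fun A => f A * (1 - z A)) = fun A => f A - f A * z A := by ext; ring
  rw [e, Ex_sub, Ex_sub, Ex_one] at h
  linarith

lemma Ex_coord (p : X → ℝ) (x : X) (F : Finset X → ℝ)
    (hF : ∀ A, F (insert x A) = F (A.erase x)) :
    Ex p (fun A => (if x ∈ A then 1 else 0) * F A) = p x * Ex p F := by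
  unfold Ex
  rw [Finset.mul_sum, ← sub_eq_zero, ← Finset.sum_sub_distrib]
  refine Finset.sum_ninvolution (g := fun A => if x ∈ A then A.erase x else insert x A)
     ?_ ?_ (fun _ => Finset.mem_univ _) ?_
  · intro A
    have key : ∀ B : Finset X, wt p B = (if x ∈ B then p x else 1 - p x) *
        ∏ y ∈ Finset.univ.erase x, if y ∈ B then p y else 1 - p y := fun B =>
      (Finset.mul_prod_erase Finset.univ _ (Finset.mem_univ x)).symm
    by_cases hx : x ∈ A
    · have h1 : ∏ y ∈ Finset.univ.erase x, (if y ∈ A.erase x then p y else 1 - p y) =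
        ∏ y ∈ Finset.univ.erase x, (if y ∈ A then p y else 1 - p y) :=
        Finset.prod_congr rfl fun y hy => by simp [Finset.ne_of_mem_erase hy]
      have h2 := hF A
      rw [Finset.insert_eq_of_mem hx] at h2
      simp only [hx, if_true, key, h1, Finset.notMem_erase, if_false, ← h2]
      ring
    · have h1 : ∏ y ∈ Finset.univ.erase x, (if y ∈ insert x A then p y else 1 - p y) =
        ∏ y ∈ Finset.univ.erase x, (if y ∈ A then p y else 1 - p y) :=
        Finset.prod_congr rfl fun y hy => by simp [Finset.ne_of_mem_erase hy]
      have h2 := hF A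
      rw [Finset.erase_eq_of_notMem hx] at h2
      simp only [hx, if_true, key, h1, Finset.mem_insert_self, if_false, h2]
      ring
  · intro A _
    by_cases hx : x ∈ A
    · simp only [hx, if_true]
      intro h
      have := Finset.notMem_erase x A
      rw [h] at this
      exact this hx
    · simp only [hx, if_false]
      intro h
      have := Finset.mem_insert_self x A
      rw [h] at this
      exact hx this
  · intro A
    by_cases hx : x ∈ A <;> simp [hx]

lemma Ex_ind_mul (p : X → ℝ) (T : List X) (hT : T.Nodup) (F : Finset X → ℝ)
    (hF : ∀ x ∈ T, ∀ A, F (insert x A) = F (A.erase x)) :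
    Ex p (fun A => ind T A * F A) = (T.map p).prod * Ex p F := by
  induction T with
  | nil => simp [ind]
  | cons x T ih =>
    rw [List.nodup_cons] at hT
    have e : (fun A => ind (x :: T) A * F A) =
        fun A => (if x ∈ A then 1 else 0) * (ind T A * F A) := by
      ext A
      simp only [ind, List.forall_mem_cons]
      by_cases hx : x ∈ A <;> simp [hx]
    rw [e, Ex_coord, ih hT.2 (fun y hy => hF y (List.mem_cons_of_mem _ hy))]
    · simp [mul_assoc]
    · intro A
      rw [hF x List.mem_cons_self]
      congr 1
      unfold ind
      congr 1
      apply propext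
      refine forall₂_congr fun y hy => ?_
      have : y ≠ x := fun h => hT.1 (h ▸ hy)
      simp [this]

lemma Ex_ind (p : X → ℝ) (T : List X) (hT : T.Nodup) : Ex p (ind T) = (T.map p).prod := by
  have := Ex_ind_mul p T hT (fun _ => 1) (fun _ _ _ => rfl)
  simpa [Ex_one] using this

lemma Ex_ind_ind (p : X → ℝ) (T S : List X) (hT : T.Nodup) (hS : S.Nodup) :
    Ex p (fun A => ind T A * ind S A) =
      (T.map p).prod * (S.map fun x => if x ∈ T then 1 else p x).prod := by
  have e : (fun A => ind T A * ind S A) =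
      fun A => ind T A * ind (S.filter (fun x => x ∉ T)) A := by
    ext A
    unfold ind
    by_cases h : ∀ x ∈ T, x ∈ A
    · rw [if_pos h, one_mul, one_mul]
      congr 1
      apply propext
      refine ⟨fun h2 x hx => h2 x (List.mem_of_mem_filter hx), fun h2 x hx => ?_⟩
      by_cases hxT : x ∈ T
      · exact h x hxT
      · exact h2 x (by simp [hx, hxT])
    · simp [h]
  rw [e, Ex_ind_mul _ _ hT, Ex_ind _ _ (hS.filter _)]
  · congr 1
    clear hS e
    induction S with
    | nil => simp
    | cons x S ih =>
      by_cases h : x ∈ T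
      · rw [List.filter_cons_of_neg (by simpa using h), ih]
        simp [h]
      · rw [List.filter_cons_of_pos (by simpa using h), List.map_cons, List.prod_cons, ih]
        simp [h]
  · intro x hx A
    unfold ind
    congr 1
    apply propext
    refine forall₂_congr fun y hy => ?_
    have : y ≠ x := by
      rintro rfl
      exact absurd hx (by simpa using (List.mem_filter.1 hy).2)
    simp [this]

noncomputable def WW (θ : ℝ) (𝒮 : Finset (List X)) (A : Finset X) : ℝ := ∏ T ∈ 𝒮, (1 - θ * ind T A)

lemma fac_nonneg (θ : ℝ) (h0 : 0 ≤ θ) (h1 : θ ≤ 1) (T : List X) (A : Finset X) :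
    0 ≤ 1 - θ * ind T A := by
  nlinarith [ind_nonneg T A, ind_le_one T A]

lemma fac_le_one (θ : ℝ) (h0 : 0 ≤ θ) (T : List X) (A : Finset X) :
    1 - θ * ind T A ≤ 1 := by
  nlinarith [ind_nonneg T A, ind_le_one T A]

lemma WW_nonneg (θ : ℝ) (h0 : 0 ≤ θ) (h1 : θ ≤ 1) (𝒮 : Finset (List X)) (A : Finset X) :
    0 ≤ WW θ 𝒮 A := Finset.prod_nonneg fun T _ => fac_nonneg θ h0 h1 T A

lemma WW_le_one (θ : ℝ) (h0 : 0 ≤ θ) (h1 : θ ≤ 1) (𝒮 : Finset (List X)) (A : Finset X) :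
    WW θ 𝒮 A ≤ 1 :=
  Finset.prod_le_one (fun T _ => fac_nonneg θ h0 h1 T A) (fun T _ => fac_le_one θ h0 T A)

lemma WW_anti (θ : ℝ) (h0 : 0 ≤ θ) (h1 : θ ≤ 1) (𝒮 : Finset (List X)) :
    Antitone (WW θ 𝒮) := by
  intro A B h
  refine Finset.prod_le_prod (fun T _ => fac_nonneg θ h0 h1 T B) (fun T _ => ?_)
  have := mul_le_mul_of_nonneg_left (ind_mono T h) h0
  linarith

lemma WW_ge (θ : ℝ) (h0 : 0 ≤ θ) (h1 : θ ≤ 1) (𝒮 : Finset (List X)) (A : Finset X) :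
    1 - θ * ∑ T ∈ 𝒮, ind T A ≤ WW θ 𝒮 A := by
  induction 𝒮 using Finset.induction_on with
  | empty => simp [WW]
  | insert T 𝒮 hT ih =>
    have e : WW θ (insert T 𝒮) A = (1 - θ * ind T A) * WW θ 𝒮 A := by
      simp [WW, Finset.prod_insert hT]
    rw [e, Finset.sum_insert hT]
    have a := mul_nonneg h0 (ind_nonneg T A)
    have b := WW_le_one θ h0 h1 𝒮 A
    nlinarith

open Classical in
/-- pair correlations of distinct intersecting lists -/
noncomputable def cor (p : X → ℝ) (T S : List X) : ℝ :=
  if T ≠ S ∧ ¬ T.Disjoint S then Ex p (fun A => ind T A * ind S A) else 0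

lemma cor_symm (p : X → ℝ) (T S : List X) : cor p T S = cor p S T := by
  unfold cor
  have e : (fun A => ind T A * ind S A) = fun A => ind S A * ind T A := by ext; ring
  rw [e]
  have e2 : (T ≠ S ∧ ¬ T.Disjoint S) ↔ (S ≠ T ∧ ¬ S.Disjoint T) := by
    rw [ne_comm, List.disjoint_comm]
  by_cases h : T ≠ S ∧ ¬ T.Disjoint S
  · rw [if_pos h, if_pos (e2.1 h)]
  · rw [if_neg h, if_neg (fun h' => h (e2.2 h'))]

lemma janson (p : X → ℝ) (hp : ∀ x, 0 ≤ p x ∧ p x ≤ 1) (θ : ℝ) (h0 : 0 ≤ θ) (h1 : θ ≤ 1)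
    (𝒮 : Finset (List X)) (h𝒮 : ∀ T ∈ 𝒮, T.Nodup) :
    Ex p (WW θ 𝒮) ≤ Real.exp (-θ * ∑ T ∈ 𝒮, (T.map p).prod
      + θ ^ 2 / 2 * ∑ T ∈ 𝒮, ∑ S ∈ 𝒮, cor p T S) := by
  classical
  induction 𝒮 using Finset.induction_on with
  | empty => simp [Ex_one, show (WW θ (∅ : Finset (List X))) = fun _ => 1 from by ext; simp [WW]]
  | insert T 𝒮 hT ih =>
    have ih := ih (fun S hS => h𝒮 S (Finset.mem_insert_of_mem hS))
    have hTn := h𝒮 T (Finset.mem_insert_self _ _)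
    have e : WW θ (insert T 𝒮) = fun A => WW θ 𝒮 A - θ * (ind T A * WW θ 𝒮 A) := by
      ext A
      simp only [WW, Finset.prod_insert hT]; ring
    set b := (T.map p).prod - θ * ∑ S ∈ 𝒮, cor p T S with hb
    set 𝒴 := 𝒮.filter (fun S => ¬ T.Disjoint S)
    set 𝒵 := 𝒮.filter (fun S => ¬ ¬ T.Disjoint S)
    have hYZ : ∀ A, WW θ 𝒮 A = WW θ 𝒴 A * WW θ 𝒵 A := fun A =>
      (Finset.prod_filter_mul_prod_filter_not _ _ _).symm
    have hZ0 : 0 ≤ Ex p (WW θ 𝒵) :=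
      Finset.sum_nonneg fun A _ => mul_nonneg (wt_nonneg p hp A) (WW_nonneg θ h0 h1 _ A)
    have hW0 : 0 ≤ Ex p (WW θ 𝒮) :=
      Finset.sum_nonneg fun A _ => mul_nonneg (wt_nonneg p hp A) (WW_nonneg θ h0 h1 _ A)
    have hWZ : Ex p (WW θ 𝒮) ≤ Ex p (WW θ 𝒵) := Ex_mono p hp fun A => by
      rw [hYZ]
      exact mul_le_of_le_one_left (WW_nonneg θ h0 h1 _ A) (WW_le_one θ h0 h1 _ A)
    have hI0 : 0 ≤ Ex p (fun A => ind T A * WW θ 𝒮 A) :=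
      Finset.sum_nonneg fun A _ => mul_nonneg (wt_nonneg p hp A)
        (mul_nonneg (ind_nonneg T A) (WW_nonneg θ h0 h1 _ A))
    have hmain : b * Ex p (WW θ 𝒵) ≤ Ex p (fun A => ind T A * WW θ 𝒮 A) := by
      have s1 : Ex p (fun A => ind T A * WW θ 𝒵 A -
          θ * ∑ S ∈ 𝒴, (ind T A * ind S A) * WW θ 𝒵 A) ≤
          Ex p (fun A => ind T A * WW θ 𝒮 A) := Ex_mono p hp fun A => by
        rw [hYZ, ← Finset.sum_mul, ← Finset.mul_sum]
        have := mul_le_mul_of_nonneg_left (WW_ge θ h0 h1 𝒴 A)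
          (mul_nonneg (ind_nonneg T A) (WW_nonneg θ h0 h1 𝒵 A))
        linarith
      rw [Ex_sub, Ex_mul, Ex_sum, Ex_ind_mul p T hTn] at s1
      · have s2 : ∑ S ∈ 𝒴, Ex p (fun A => (ind T A * ind S A) * WW θ 𝒵 A) ≤
            (∑ S ∈ 𝒮, cor p T S) * Ex p (WW θ 𝒵) := by
          have : ∑ S ∈ 𝒮, cor p T S = ∑ S ∈ 𝒴, Ex p (fun A => ind T A * ind S A) := by
            rw [Finset.sum_filter]
            refine Finset.sum_congr rfl fun S hS => ?_
            have : T ≠ S := by rintro rfl; exact hT hS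
            simp [cor, this]
          rw [this, Finset.sum_mul]
          refine Finset.sum_le_sum fun S _ => ?_
          refine harris p hp _ _ (fun A => mul_nonneg (ind_nonneg T A) (ind_nonneg S A)) ?_
            (WW_le_one θ h0 h1 _) (WW_anti θ h0 h1 _)
          intro A B hAB
          exact mul_le_mul (ind_mono T hAB) (ind_mono S hAB) (ind_nonneg _ _) (ind_nonneg _ _)
        have := mul_le_mul_of_nonneg_left s2 h0
        rw [hb]
        linarith
      · intro x hx A
        unfold WW
        refine Finset.prod_congr rfl fun S hS => ?_
        have hd : T.Disjoint S := not_not.1 (Finset.mem_filter.1 hS).2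
        congr 2
        unfold ind
        congr 1
        apply propext
        refine forall₂_congr fun y hy => ?_
        have : y ≠ x := by
          rintro rfl
          exact hd hx hy
        simp [this]
    have hstep : Ex p (WW θ (insert T 𝒮)) ≤ Ex p (WW θ 𝒮) * Real.exp (-θ * b) := by
      rw [e, Ex_sub, Ex_mul]
      have hexp := Real.add_one_le_exp (-θ * b)
      rcases le_or_gt 0 b with hb0 | hb0
      · have := mul_le_mul_of_nonneg_left hWZ hb0
        have h3 := mul_le_mul_of_nonneg_left (this.trans hmain) h0
        have h4 := mul_le_mul_of_nonneg_left hexp hW0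
        linarith
      · have : 0 ≤ -θ * b := by nlinarith
        have h4 := mul_le_mul_of_nonneg_left hexp hW0
        nlinarith [mul_nonneg h0 hI0, mul_nonneg hW0 this]
    refine hstep.trans ((mul_le_mul_of_nonneg_right ih (Real.exp_pos _).le).trans ?_)
    rw [← Real.exp_add]
    apply Real.exp_le_exp.2
    rw [Finset.sum_insert hT, Finset.sum_insert hT, Finset.sum_insert hT]
    have h5 : ∑ S ∈ 𝒮, ∑ S' ∈ insert T 𝒮, cor p S S' =
        ∑ S ∈ 𝒮, cor p T S + ∑ S ∈ 𝒮, ∑ S' ∈ 𝒮, cor p S S' := by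
      rw [← Finset.sum_add_distrib]
      refine Finset.sum_congr rfl fun S _ => ?_
      rw [Finset.sum_insert hT, cor_symm]
    have h6 : cor p T T = 0 := by simp [cor]
    rw [h5, h6, hb]
    apply le_of_eq
    ring

end Spr

namespace Spr
variable {X : Type*} [Fintype X] [DecidableEq X]

open Classical in
noncomputable def nb (𝒢 : SimpleGraph X) (x : X) : Finset X := Finset.univ.filter (𝒢.Adj x)

noncomputable def walks (𝒢 : SimpleGraph X) : ℕ → X → Finset (List X)
  | 0, _ => {[]}
  | n + 1, x => (nb 𝒢 x).biUnion fun y => (walks 𝒢 n y).image (fun L => y :: L)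

lemma mem_walks (𝒢 : SimpleGraph X) (L : List X) : ∀ x, (x :: L).IsChain 𝒢.Adj →
    L ∈ walks 𝒢 L.length x := by
  induction L with
  | nil => intro x _; simp [walks]
  | cons y L ih =>
    intro x h
    rw [List.isChain_cons_cons] at h
    simp only [List.length_cons, walks, Finset.mem_biUnion, Finset.mem_image]
    exact ⟨y, by simp [nb, h.1], L, ih y h.2, rfl⟩

lemma sum_walks (𝒢 : SimpleGraph X) (q : X → ℝ) (hq : ∀ x, 0 ≤ q x) (K : ℝ)
    (hK : ∀ x, ∑ y ∈ nb 𝒢 x, q y ≤ K) (hK0 : 0 ≤ K) (n : ℕ) : ∀ x,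
    ∑ L ∈ walks 𝒢 n x, (L.map q).prod ≤ K ^ n := by
  induction n with
  | zero => intro x; simp [walks]
  | succ n ih =>
    intro x
    rw [walks, Finset.sum_biUnion]
    · calc _ = ∑ y ∈ nb 𝒢 x, q y * ∑ L ∈ walks 𝒢 n y, (L.map q).prod := by
            refine Finset.sum_congr rfl fun y _ => ?_
            rw [Finset.sum_image (by intro a _ b _ h; simpa using h), Finset.mul_sum]
            simp
        _ ≤ ∑ y ∈ nb 𝒢 x, q y * K ^ n :=
            Finset.sum_le_sum fun y _ => mul_le_mul_of_nonneg_left (ih y) (hq y)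
        _ = (∑ y ∈ nb 𝒢 x, q y) * K ^ n := by rw [Finset.sum_mul]
        _ ≤ K * K ^ n := mul_le_mul_of_nonneg_right (hK x) (pow_nonneg hK0 n)
        _ = K ^ (n + 1) := by ring
    · intro y _ z _ hyz
      rw [Function.onFun, Finset.disjoint_left]
      intro L h1 h2
      obtain ⟨a, _, rfl⟩ := Finset.mem_image.1 h1
      obtain ⟨b, _, h⟩ := Finset.mem_image.1 h2
      simp only [List.cons.injEq] at h
      exact hyz h.1.symm

lemma prod_map_nonneg (q : X → ℝ) (hq : ∀ x, 0 ≤ q x) (L : List X) : 0 ≤ (L.map q).prod :=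
  List.prod_nonneg (by
    intro a ha
    obtain ⟨x, _, rfl⟩ := List.mem_map.1 ha
    exact hq x)

lemma sum_all (𝒢 : SimpleGraph X) (q : X → ℝ) (hq : ∀ x, 0 ≤ q x) (K : ℝ)
    (hK : ∀ x, ∑ y ∈ nb 𝒢 x, q y ≤ K) (hK0 : 0 ≤ K) (n : ℕ) (𝒮 : Finset (List X))
    (h𝒮 : ∀ S ∈ 𝒮, S.length = n + 1 ∧ S.IsChain 𝒢.Adj) :
    ∑ S ∈ 𝒮, (S.map q).prod ≤ (∑ x, q x) * K ^ n := by
  have hsub : 𝒮 ⊆ ((Finset.univ : Finset X).sigma (fun x => walks 𝒢 n x)).image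
      (fun z => z.1 :: z.2) := by
    intro S hS
    obtain ⟨h1, h2⟩ := h𝒮 S hS
    match S, h1, h2 with
    | x :: L, h1, h2 =>
      have := mem_walks 𝒢 L x h2
      have hl : L.length = n := by simpa using h1
      rw [hl] at this
      exact Finset.mem_image.2 ⟨⟨x, L⟩, by simp [this], rfl⟩
  refine (Finset.sum_le_sum_of_subset_of_nonneg hsub
    (fun L _ _ => prod_map_nonneg q hq L)).trans ?_
  refine (Finset.sum_image_le_of_nonneg (fun L _ => prod_map_nonneg q hq L)).trans ?_
  rw [Finset.sum_sigma, Finset.sum_mul]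
  refine Finset.sum_le_sum fun x _ => ?_
  simp only [List.map_cons, List.prod_cons, ← Finset.mul_sum]
  exact mul_le_mul_of_nonneg_left (sum_walks 𝒢 q hq K hK hK0 n x) (hq x)

lemma sum_meet (𝒢 : SimpleGraph X) (q : X → ℝ) (hq : ∀ x, 0 ≤ q x) (K : ℝ)
    (hK : ∀ x, ∑ y ∈ nb 𝒢 x, q y ≤ K) (hK0 : 0 ≤ K) (n : ℕ) (T : List X)
    (hT : T.length = n + 1) (hq1 : ∀ x ∈ T, q x ≤ 1) (𝒮 : Finset (List X))
    (h𝒮 : ∀ S ∈ 𝒮, S.length = n + 1 ∧ S.IsChain 𝒢.Adj ∧ ¬ T.Disjoint S) :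
    ∑ S ∈ 𝒮, (S.map q).prod ≤ ((n : ℝ) + 1) ^ 2 * K ^ n := by
  have hsub : 𝒮 ⊆ ((T.toFinset ×ˢ Finset.range (n + 1)).sigma
      (fun z => walks 𝒢 z.2 z.1 ×ˢ walks 𝒢 (n - z.2) z.1)).image
      (fun z => z.2.1.reverse ++ z.1.1 :: z.2.2) := by
    intro S hS
    obtain ⟨h1, h2, h3⟩ := h𝒮 S hS
    simp only [List.Disjoint, not_forall] at h3
    obtain ⟨x, hxT, hxS, -⟩ := h3
    obtain ⟨L1, L2, rfl⟩ := List.append_of_mem hxS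
    rw [List.isChain_split] at h2
    have m2 := mem_walks 𝒢 L2 x h2.2
    have m1 := mem_walks 𝒢 L1.reverse x (by
      have : x :: L1.reverse = (L1 ++ [x]).reverse := by simp
      rw [this, List.isChain_reverse]
      refine h2.1.imp ?_
      intro a b h
      exact h.symm)
    rw [List.length_reverse] at m1
    simp only [List.length_append, List.length_cons] at h1
    refine Finset.mem_image.2 ⟨⟨(x, L1.length), (L1.reverse, L2)⟩, ?_, by simp⟩
    have : n - L1.length = L2.length := by omega
    simp only [Finset.mem_sigma, Finset.mem_product, List.mem_toFinset, Finset.mem_range, this]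
    exact ⟨⟨hxT, by omega⟩, m1, m2⟩
  refine (Finset.sum_le_sum_of_subset_of_nonneg hsub
    (fun L _ _ => prod_map_nonneg q hq L)).trans ?_
  refine (Finset.sum_image_le_of_nonneg (fun L _ => prod_map_nonneg q hq L)).trans ?_
  rw [Finset.sum_sigma]
  calc _ ≤ ∑ z ∈ T.toFinset ×ˢ Finset.range (n + 1), K ^ n := by
        refine Finset.sum_le_sum fun z hz => ?_
        rw [Finset.mem_product, List.mem_toFinset, Finset.mem_range] at hz
        have e : ∑ s ∈ walks 𝒢 z.2 z.1 ×ˢ walks 𝒢 (n - z.2) z.1,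
            ((s.1.reverse ++ z.1 :: s.2).map q).prod =
            q z.1 * ((∑ L ∈ walks 𝒢 z.2 z.1, (L.map q).prod) *
              ∑ L ∈ walks 𝒢 (n - z.2) z.1, (L.map q).prod) := by
          rw [Finset.sum_mul_sum, ← Finset.sum_product', Finset.mul_sum]
          refine Finset.sum_congr rfl fun s _ => ?_
          simp only [List.map_append, List.prod_append, List.map_cons, List.prod_cons,
            List.map_reverse, List.prod_reverse]
          ring
        refine e.le.trans ?_
        have n1 : 0 ≤ ∑ L ∈ walks 𝒢 z.2 z.1, (L.map q).prod :=
          Finset.sum_nonneg fun L _ => prod_map_nonneg q hq L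
        have n2 : 0 ≤ ∑ L ∈ walks 𝒢 (n - z.2) z.1, (L.map q).prod :=
          Finset.sum_nonneg fun L _ => prod_map_nonneg q hq L
        refine (mul_le_of_le_one_left (mul_nonneg n1 n2) (hq1 _ hz.1)).trans ?_
        refine (mul_le_mul (sum_walks 𝒢 q hq K hK hK0 _ _) (sum_walks 𝒢 q hq K hK hK0 _ _) n2
          (pow_nonneg hK0 _)).trans ?_
        rw [← pow_add]
        have : z.2 + (n - z.2) = n := by omega
        rw [this]
    _ = (T.toFinset.card : ℝ) * ((n : ℝ) + 1) * K ^ n := by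
        rw [Finset.sum_const, Finset.card_product, Finset.card_range]
        simp
    _ ≤ _ := by
        have : (T.toFinset.card : ℝ) ≤ (n : ℝ) + 1 := by
          have := T.toFinset_card_le
          rw [hT] at this
          exact_mod_cast this
        refine mul_le_mul_of_nonneg_right ?_ (pow_nonneg hK0 n)
        nlinarith [(Nat.cast_nonneg n : (0 : ℝ) ≤ n)]

lemma unif_Iic (a : ℝ) (h0 : 0 ≤ a) (h1 : a ≤ 1) :
    uniformLabel (Set.Iic a) = ENNReal.ofReal a := by
  unfold uniformLabel
  rw [Measure.restrict_apply measurableSet_Iic]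
  have : Set.Iic a ∩ Set.Ioc 0 1 = Set.Ioc 0 a := by
    ext x; simp only [Set.mem_inter_iff, Set.mem_Iic, Set.mem_Ioc]
    constructor
    · rintro ⟨h, h', _⟩; exact ⟨h', h⟩
    · rintro ⟨h, h'⟩; exact ⟨h', h, h'.trans h1⟩
  rw [this, Real.volume_Ioc, sub_zero]

lemma unif_Ioi (a : ℝ) (h0 : 0 ≤ a) (h1 : a ≤ 1) :
    uniformLabel (Set.Ioi a) = ENNReal.ofReal (1 - a) := by
  unfold uniformLabel
  rw [Measure.restrict_apply measurableSet_Ioi]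
  have : Set.Ioi a ∩ Set.Ioc 0 1 = Set.Ioc a 1 := by
    ext x; simp only [Set.mem_inter_iff, Set.mem_Ioi, Set.mem_Ioc]
    constructor
    · rintro ⟨h, h', h''⟩; exact ⟨h, h''⟩
    · rintro ⟨h, h'⟩; exact ⟨h, h0.trans_lt h, h'⟩
  rw [this, Real.volume_Ioc]

instance : IsProbabilityMeasure uniformLabel := ⟨by simp [uniformLabel]⟩

instance : IsProbabilityMeasure (bernoulliFamily X) := by
  unfold bernoulliFamily; infer_instance

open Classical in
lemma measure_le (p : X → ℝ) (hp : ∀ x, 0 ≤ p x ∧ p x ≤ 1) (P : Finset X → Prop) :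
    bernoulliFamily X {ω | P (Finset.univ.filter fun x => ω x ≤ p x)} ≤
      ENNReal.ofReal (Ex p fun A => if P A then 1 else 0) := by
  have hsub : {ω : X → ℝ | P (Finset.univ.filter fun x => ω x ≤ p x)} ⊆
      ⋃ A ∈ (Finset.univ.filter P : Finset (Finset X)),
        Set.pi Set.univ (fun x => if x ∈ A then Set.Iic (p x) else Set.Ioi (p x)) := by
    intro ω hω
    simp only [Set.mem_iUnion]
    refine ⟨Finset.univ.filter fun x => ω x ≤ p x, by simpa using hω, ?_⟩
    intro x _
    by_cases h : ω x ≤ p x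
    · simp [h]
    · simp [h, lt_of_not_ge h]
  refine (measure_mono hsub).trans ((measure_biUnion_finset_le _ _).trans ?_)
  have e : (Ex p fun A => if P A then 1 else 0) = ∑ A ∈ Finset.univ.filter P, wt p A := by
    unfold Ex
    rw [Finset.sum_filter]
    exact Finset.sum_congr rfl fun A _ => by by_cases hA : P A <;> simp [hA]
  rw [e, ENNReal.ofReal_sum_of_nonneg (fun A _ => wt_nonneg p hp A)]
  refine Finset.sum_le_sum fun A _ => le_of_eq ?_
  unfold bernoulliFamily wt
  rw [Measure.pi_pi, ENNReal.ofReal_prod_of_nonneg]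
  · refine Finset.prod_congr rfl fun x _ => ?_
    split_ifs
    · exact unif_Iic _ (hp x).1 (hp x).2
    · exact unif_Ioi _ (hp x).1 (hp x).2
  · intro x _
    split_ifs
    · exact (hp x).1
    · linarith [(hp x).2]

lemma nbr_le (p : X → ℝ) (𝒢 : SimpleGraph X) (x : X) :
    ∑ y ∈ nb 𝒢 x, p y ≤ maxNbrWeight 𝒢 p := by
  unfold maxNbrWeight
  refine le_csSup ?_ ⟨x, ?_⟩
  · refine Set.Finite.bddAbove ?_
    refine (Set.finite_range fun x => ∑ᶠ y ∈ 𝒢.neighborSet x, p y).subset ?_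
    rintro s ⟨x, rfl⟩
    exact ⟨x, rfl⟩
  · rw [finsum_mem_eq_sum_of_inter_support_eq]
    ext y
    simp [nb]

lemma main_bound (p : X → ℝ) (hp : ∀ x, 0 ≤ p x ∧ p x ≤ 1) (𝒮 : Finset (List X))
    (h𝒮 : ∀ T ∈ 𝒮, T.Nodup) (θ : ℝ) (h0 : 0 ≤ θ) (h1 : θ ≤ 1) :
    bernoulliFamily X {ω | ∀ T ∈ 𝒮, ∃ x ∈ T, ¬ ω x ≤ p x} ≤
      ENNReal.ofReal (Real.exp (-θ * ∑ T ∈ 𝒮, (T.map p).prod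
      + θ ^ 2 / 2 * ∑ T ∈ 𝒮, ∑ S ∈ 𝒮, cor p T S)) := by
  classical
  have h := measure_le p hp (fun A => ∀ T ∈ 𝒮, ∃ x ∈ T, x ∉ A)
  simp only [Finset.mem_filter, Finset.mem_univ, true_and] at h
  refine h.trans (ENNReal.ofReal_le_ofReal (le_trans ?_ (janson p hp θ h0 h1 𝒮 h𝒮)))
  refine Ex_mono p hp fun A => ?_
  split_ifs with hA
  · unfold WW
    refine le_of_eq (Finset.prod_eq_one fun T hT => ?_).symm
    have : ¬ ∀ x ∈ T, x ∈ A := by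
      push Not
      exact hA T hT
    simp [ind, this]
  · exact WW_nonneg θ h0 h1 _ _

end Spr

/-- **Lemma 20 (sprinkling).**  Let `𝒯` be a family of paths on `r` vertices in a graph
`𝒢` on `X`, let `Δ = max_x p(N_𝒢(x))`, and let `X_p` be a product-Bernoulli random
subset of `X`.  If `p[𝒯] ≥ 6 (3Δ)^{r-2} p(X)`, then the probability that no path of `𝒯`
is entirely contained in `X_p` is at most `exp(-p[𝒯]/((3Δ)^{r-1} r^r))`. -/
theorem lemma_sprinkling (X : Type*) [Fintype X] (p : X → ℝ)
    (hp : ∀ x, 0 ≤ p x ∧ p x ≤ 1) (𝒢 : SimpleGraph X)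
    (r : ℕ) (hr : 1 ≤ r) (𝒯 : Set (List X))
    (h𝒯 : ∀ T ∈ 𝒯, T.length = r ∧ T.Nodup ∧ T.Chain' 𝒢.Adj)
    (hbig : 6 * (3 * maxNbrWeight 𝒢 p) ^ ((r : ℤ) - 2) * (∑ x, p x) ≤ pathWeight p 𝒯) :
    bernoulliFamily X {ω | ∀ T ∈ 𝒯, ∃ x ∈ T, ¬ ω x ≤ p x}
      ≤ ENNReal.ofReal (Real.exp (-(pathWeight p 𝒯 /
          ((3 * maxNbrWeight 𝒢 p) ^ (r - 1) * (r : ℝ) ^ r)))) := by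
  classical
  obtain ⟨n, rfl⟩ : ∃ n, r = n + 1 := ⟨r - 1, by omega⟩
  have hfin : 𝒯.Finite := (List.finite_length_eq X (n + 1)).subset fun T hT => (h𝒯 T hT).1
  obtain ⟨𝒮, rfl⟩ : ∃ 𝒮 : Finset (List X), 𝒯 = ↑𝒮 := ⟨hfin.toFinset, by simp⟩
  have hμ : pathWeight p (↑𝒮 : Set (List X)) = ∑ T ∈ 𝒮, (T.map p).prod := by
    unfold pathWeight
    exact finsum_mem_coe_finset _ _
  rw [hμ] at hbig ⊢
  simp only [Finset.mem_coe] at h𝒯 ⊢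
  have hnod : ∀ T ∈ 𝒮, T.Nodup := fun T hT => (h𝒯 T hT).2.1
  have hch : ∀ T ∈ 𝒮, T.IsChain 𝒢.Adj := fun T hT => (h𝒯 T hT).2.2
  have hp0 : ∀ x, 0 ≤ p x := fun x => (hp x).1
  have hΔ := Spr.nbr_le p 𝒢
  set Δ := maxNbrWeight 𝒢 p with hΔdef
  set μ := ∑ T ∈ 𝒮, (T.map p).prod with hμdef
  have hμ0 : 0 ≤ μ := Finset.sum_nonneg fun T _ => Spr.prod_map_nonneg p hp0 T
  have htriv : ∀ a : ℝ, a = 0 → bernoulliFamily X {ω | ∀ T ∈ 𝒮, ∃ x ∈ T, ¬ ω x ≤ p x}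
      ≤ ENNReal.ofReal (Real.exp (-a)) := by
    rintro a rfl
    simpa using prob_le_one
  rcases Nat.eq_zero_or_pos n with rfl | hn
  · -- single vertices
    refine (Spr.main_bound p hp 𝒮 hnod 1 zero_le_one le_rfl).trans
      (ENNReal.ofReal_le_ofReal (Real.exp_le_exp.2 ?_))
    have : ∑ T ∈ 𝒮, ∑ S ∈ 𝒮, Spr.cor p T S = 0 := by
      refine Finset.sum_eq_zero fun T hT => Finset.sum_eq_zero fun S hS => ?_
      unfold Spr.cor
      rw [if_neg]
      rintro ⟨h1, h2⟩
      obtain ⟨a, rfl⟩ := List.length_eq_one_iff.1 (h𝒯 T hT).1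
      obtain ⟨b, rfl⟩ := List.length_eq_one_iff.1 (h𝒯 S hS).1
      simp at h1 h2
      exact h1 h2.symm
    rw [this]
    simp [hμdef]
  · by_cases hX : ∑ x, p x = 0
    · apply htriv
      have hz : ∀ x, p x = 0 := fun x =>
        (Finset.sum_eq_zero_iff_of_nonneg fun x _ => hp0 x).1 hX x (Finset.mem_univ x)
      have : μ = 0 := by
        refine Finset.sum_eq_zero fun T hT => ?_
        have h := (h𝒯 T hT).1
        match T, h with
        | x :: L, _ => simp [hz x]
      rw [this, zero_div]
    · have hXpos : 0 < ∑ x, p x :=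
        lt_of_le_of_ne (Finset.sum_nonneg fun x _ => hp0 x) (Ne.symm hX)
      have hΔ0 : 0 ≤ Δ := by
        obtain ⟨x, -, -⟩ := Finset.exists_ne_zero_of_sum_ne_zero hX
        exact (Finset.sum_nonneg fun y _ => hp0 y).trans (hΔ x)
      by_cases hΔz : Δ = 0
      · apply htriv
        rw [hΔz, Nat.add_sub_cancel]
        simp [hn.ne']
      have hΔpos : 0 < Δ := lt_of_le_of_ne hΔ0 (Ne.symm hΔz)
      -- the degree is large
      obtain ⟨m, rfl⟩ : ∃ m, n = m + 1 := ⟨n - 1, by omega⟩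
      have hup := Spr.sum_all 𝒢 p hp0 Δ hΔ hΔ0 (m + 1) 𝒮 (fun S hS => ⟨(h𝒯 S hS).1, hch S hS⟩)
      have hexp : ((m + 1 + 1 : ℕ) : ℤ) - 2 = (m : ℤ) := by push_cast; ring
      rw [hexp, zpow_natCast] at hbig
      have hlarge : 2 * ((m : ℝ) + 2) ≤ Δ := by
        have h1 : (6 * 3 ^ m) * (Δ ^ m * ∑ x, p x) ≤ Δ * (Δ ^ m * ∑ x, p x) := by
          have := hbig.trans hup
          rw [mul_pow, pow_succ] at this
          linarith
        have h2 := le_of_mul_le_mul_right h1 (mul_pos (pow_pos hΔpos m) hXpos)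
        have h3 := one_add_mul_le_pow (show (-2 : ℝ) ≤ 2 by norm_num) m
        norm_num at h3
        have : (0 : ℝ) ≤ m := Nat.cast_nonneg m
        linarith
      set K := Δ + ((m : ℝ) + 2) with hKdef
      have hm0 : (0 : ℝ) ≤ m := Nat.cast_nonneg m
      have hK1 : 1 ≤ K := by linarith
      set D := ((m : ℝ) + 2) ^ 2 * K ^ (m + 1) with hDdef
      have hD1 : 1 ≤ D := by
        have a : 1 ≤ ((m : ℝ) + 2) ^ 2 := one_le_pow₀ (by linarith)
        have b : 1 ≤ K ^ (m + 1) := one_le_pow₀ hK1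
        exact one_le_mul_of_one_le_of_one_le a b
      have hcor : ∑ T ∈ 𝒮, ∑ S ∈ 𝒮, Spr.cor p T S ≤ μ * D := by
        rw [hμdef, Finset.sum_mul]
        refine Finset.sum_le_sum fun T hT => ?_
        set q : X → ℝ := fun x => if x ∈ T then 1 else p x with hq
        have hq0 : ∀ x, 0 ≤ q x := fun x => by
          simp only [hq]; split_ifs
          · norm_num
          · exact hp0 x
        have hlen := (h𝒯 T hT).1
        have hqK : ∀ x, ∑ y ∈ Spr.nb 𝒢 x, q y ≤ K := by
          intro x
          calc ∑ y ∈ Spr.nb 𝒢 x, q y ≤ ∑ y ∈ Spr.nb 𝒢 x, (p y + if y ∈ T.toFinset then 1 else 0) := by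
                refine Finset.sum_le_sum fun y _ => ?_
                simp only [hq, List.mem_toFinset]
                split_ifs
                · linarith [hp0 y]
                · linarith
            _ = ∑ y ∈ Spr.nb 𝒢 x, p y + ∑ y ∈ Spr.nb 𝒢 x, (if y ∈ T.toFinset then (1 : ℝ) else 0) :=
                Finset.sum_add_distrib
            _ ≤ K := by
                refine add_le_add (hΔ x) ?_
                rw [← Finset.sum_filter, Finset.sum_const, nsmul_one]
                have c1 : ((Spr.nb 𝒢 x).filter (fun y => y ∈ T.toFinset)).card ≤ T.toFinset.card :=
                  Finset.card_le_card fun y hy => (Finset.mem_filter.1 hy).2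
                have c2 := T.toFinset_card_le
                have c3 : ((Spr.nb 𝒢 x).filter (fun y => y ∈ T.toFinset)).card ≤ m + 2 := by omega
                exact_mod_cast c3
        have hmeet := Spr.sum_meet 𝒢 q hq0 K hqK (by linarith) (m + 1) T hlen
          (fun x hx => by simp [hq, hx]) (𝒮.filter fun S => ¬ T.Disjoint S)
          (fun S hS => by
            rw [Finset.mem_filter] at hS
            exact ⟨(h𝒯 S hS.1).1, hch S hS.1, hS.2⟩)
        have hD' : ((((m + 1 : ℕ) : ℝ) + 1) ^ 2 * K ^ (m + 1)) = D := by
          rw [hDdef]; push_cast; ring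
        rw [hD'] at hmeet
        have hT0 := Spr.prod_map_nonneg p hp0 T
        refine le_trans ?_ (mul_le_mul_of_nonneg_left hmeet hT0)
        rw [Finset.sum_filter, Finset.mul_sum]
        refine Finset.sum_le_sum fun S hS => ?_
        unfold Spr.cor
        rw [Spr.Ex_ind_ind p T S (hnod T hT) (hnod S hS)]
        have hS0 := mul_nonneg hT0 (Spr.prod_map_nonneg q hq0 S)
        by_cases hd : T.Disjoint S
        · simp [hd]
        · by_cases hTS : T = S
          · subst hTS
            simp only [ne_eq, not_true_eq_false, false_and, if_false, hd, not_false_eq_true, if_true]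
            exact hS0
          · simp [hd, hTS, hq]
      refine (Spr.main_bound p hp 𝒮 hnod (1 / D) (by positivity)
        ((div_le_one (by linarith)).2 hD1)).trans
        (ENNReal.ofReal_le_ofReal (Real.exp_le_exp.2 ?_))
      have hDpos : 0 < D := by linarith
      have hfin1 : -(1 / D) * μ + (1 / D) ^ 2 / 2 * ∑ T ∈ 𝒮, ∑ S ∈ 𝒮, Spr.cor p T S
          ≤ -(μ / (2 * D)) := by
        have := mul_le_mul_of_nonneg_left hcor (show 0 ≤ (1 / D) ^ 2 / 2 by positivity)
        have e : (1 / D) ^ 2 / 2 * (μ * D) = μ / (2 * D) := by field_simp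
        have e2 : -(1 / D) * μ = - (2 * (μ / (2 * D))) := by field_simp
        rw [e] at this
        rw [e2]
        linarith
      refine hfin1.trans (neg_le_neg ?_)
      refine div_le_div_of_nonneg_left hμ0 (by positivity) ?_
      rw [Nat.add_sub_cancel, hDdef]
      have hK2 : 2 * K ≤ 3 * Δ := by linarith
      have h1 : (2 * K) ^ (m + 1) ≤ (3 * Δ) ^ (m + 1) := pow_le_pow_left₀ (by linarith) hK2 _
      have h2 : ((m : ℝ) + 2) ^ 2 ≤ ((m + 1 + 1 : ℕ) : ℝ) ^ (m + 1 + 1) := by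
        have : ((m + 1 + 1 : ℕ) : ℝ) = (m : ℝ) + 2 := by push_cast; ring
        rw [this]
        exact pow_le_pow_right₀ (by linarith) (by omega)
      have h3 : 2 * K ^ (m + 1) ≤ (2 * K) ^ (m + 1) := by
        rw [mul_pow]
        refine mul_le_mul_of_nonneg_right ?_ (by positivity)
        calc (2 : ℝ) = 2 ^ 1 := by norm_num
          _ ≤ 2 ^ (m + 1) := pow_le_pow_right₀ (by norm_num) (by omega)
      calc 2 * (((m : ℝ) + 2) ^ 2 * K ^ (m + 1)) = (2 * K ^ (m + 1)) * ((m : ℝ) + 2) ^ 2 := by ring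
        _ ≤ _ := mul_le_mul (h3.trans h1) h2 (by positivity) (by positivity)
end
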